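/- arXiv:1910.04401 — 2 statements merged into one kernel-verified Lean document; each statement's English description precedes it below -/
import Mathlib

section
/- Let μ and μ' be stable matchings of the same matching market. Then every man weakly prefers his partner in μ over his partner in μ' (μ(m) ⪰_m μ'(m) for all m ∈ M) if and only if every woman weakly prefers her partner in μ' over her partner in μ (μ'(w) ⪰_w μ(w) for all w ∈ W). -/
/-- A matching market: men `M` and women `W`; each man has a strict preference
order over `W ∪ {∅}` and each woman over `M ∪ {∅}`, encoded by injective rank
functions (a strictly higher rank means strictly more preferred); `none`
plays the role of `∅` (being unmatched), and partners ranked below `none`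
are unacceptable. -/
structure Market (M W : Type*) where
  mRank : M → Option W → ℕ
  wRank : W → Option M → ℕ
  mRank_inj : ∀ m, Function.Injective (mRank m)
  wRank_inj : ∀ w, Function.Injective (wRank w)

/-- A matching: `mu` assigns each man a woman or `none`, `nu` assigns each
woman a man or `none`, and `μ(m) = w ↔ μ(w) = m`. -/
structure Matching (M W : Type*) where
  mu : M → Option W
  nu : W → Option M
  consistent : ∀ m w, mu m = some w ↔ nu w = some m

variable {M W : Type*}

/-- Every matched agent prefers their partner to `∅`. -/
def Market.IndivRational (mkt : Market M W) (μ : Matching M W) : Prop :=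
  (∀ m w, μ.mu m = some w → mkt.mRank m none < mkt.mRank m (some w)) ∧
  (∀ w m, μ.nu w = some m → mkt.wRank w none < mkt.wRank w (some m))

/-- `(m, w)` is a blocking pair for `μ`: they are not matched to each other,
`w ≻_m μ(m)` and `m ≻_w μ(w)`. -/
def Market.Blocking (mkt : Market M W) (μ : Matching M W) (m : M) (w : W) : Prop :=
  μ.mu m ≠ some w ∧
  mkt.mRank m (μ.mu m) < mkt.mRank m (some w) ∧
  mkt.wRank w (μ.nu w) < mkt.wRank w (some m)

/-- A matching is stable if it is individually rational and has no blocking pair. -/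
def Market.Stable (mkt : Market M W) (μ : Matching M W) : Prop :=
  mkt.IndivRational μ ∧ ∀ m w, ¬ mkt.Blocking μ m w

/-- Woman-dominance: `μ ≥ μ'` iff every woman weakly prefers her partner in `μ`. -/
def Market.Dom (mkt : Market M W) (μ μ' : Matching M W) : Prop :=
  ∀ w, mkt.wRank w (μ'.nu w) ≤ mkt.wRank w (μ.nu w)

/-- Strict woman-dominance: `μ > μ'`. -/
def Market.StrictDom (mkt : Market M W) (μ μ' : Matching M W) : Prop :=
  mkt.Dom μ μ' ∧ μ ≠ μ'

/-- `μ'` covers `μ` in the woman-dominance order on stable matchings. -/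
def Market.Covers (mkt : Market M W) (μ' μ : Matching M W) : Prop :=
  mkt.StrictDom μ' μ ∧
  ¬ ∃ μ'' : Matching M W, mkt.Stable μ'' ∧ mkt.StrictDom μ' μ'' ∧ mkt.StrictDom μ'' μ

/-- `μ'` is the elimination of the list `ρ = [(w_0,m_0),…,(w_{k-1},m_{k-1})]`
from `μ`: `k ≥ 2`, the women (resp. men) in `ρ` are distinct, `μ(w_i) = m_i`,
`μ'(m_i) = w_{(i+1) mod k}`, and every agent not appearing in `ρ` has the same
partner in `μ` and `μ'`. -/
def Matching.IsElimOf (μ' μ : Matching M W) (ρ : List (W × M)) : Prop :=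
  2 ≤ ρ.length ∧
  (ρ.map Prod.fst).Nodup ∧ (ρ.map Prod.snd).Nodup ∧
  (∀ i : Fin ρ.length, μ.nu (ρ.get i).1 = some (ρ.get i).2) ∧
  (∀ i : Fin ρ.length, μ'.mu (ρ.get i).2 =
    some (ρ.get ⟨(i.1 + 1) % ρ.length,
      Nat.mod_lt _ (Nat.lt_of_le_of_lt (Nat.zero_le _) i.isLt)⟩).1) ∧
  (∀ m : M, m ∉ ρ.map Prod.snd → μ'.mu m = μ.mu m) ∧
  (∀ w : W, w ∉ ρ.map Prod.fst → μ'.nu w = μ.nu w)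

/-- `ρ` is a rotation exposed in `μ`: the elimination of `ρ` from `μ` is a
stable matching which covers `μ`. -/
def Market.ExposedRotation (mkt : Market M W) (μ : Matching M W) (ρ : List (W × M)) : Prop :=
  ∃ μ' : Matching M W, Matching.IsElimOf μ' μ ρ ∧ mkt.Stable μ' ∧ mkt.Covers μ' μ

/-- `ρ` belongs to the set `Π` of all rotations, i.e. it is exposed in some
stable matching. -/
def Market.InPi (mkt : Market M W) (ρ : List (W × M)) : Prop :=
  ∃ μ : Matching M W, mkt.Stable μ ∧ mkt.ExposedRotation μ ρ

/-- The cyclically next index in a rotation. -/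
def RotNext (ρ : List (W × M)) (i : Fin ρ.length) : Fin ρ.length :=
  ⟨(i.1 + 1) % ρ.length, Nat.mod_lt _ (Nat.lt_of_le_of_lt (Nat.zero_le _) i.isLt)⟩

/-- The cyclically previous index in a rotation. -/
def RotPrev (ρ : List (W × M)) (i : Fin ρ.length) : Fin ρ.length :=
  ⟨(i.1 + ρ.length - 1) % ρ.length, Nat.mod_lt _ (Nat.lt_of_le_of_lt (Nat.zero_le _) i.isLt)⟩

/-- `ρ` moves man `m` from `w` to `w'` (i.e. `m = m_i`, `w = w_i`, `w' = w_{i+1}`). -/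
def MovesManFromTo (ρ : List (W × M)) (m : M) (w w' : W) : Prop :=
  ∃ i : Fin ρ.length, (ρ.get i).2 = m ∧ (ρ.get i).1 = w ∧ (ρ.get (RotNext ρ i)).1 = w'

/-- `ρ` moves woman `w` from `m` to `m'` (i.e. `w = w_i`, `m = m_i`, `m' = m_{i-1}`). -/
def MovesWomanFromTo (ρ : List (W × M)) (w : W) (m m' : M) : Prop :=
  ∃ i : Fin ρ.length, (ρ.get i).1 = w ∧ (ρ.get i).2 = m ∧ (ρ.get (RotPrev ρ i)).2 = m'

/-- `ρ1` is a type 1 predecessor of `ρ2`: `ρ1` moves some man `m` to a woman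
`w` and the pair `(w, m)` appears in `ρ2`. -/
def Market.Type1Pred (_mkt : Market M W) (ρ1 ρ2 : List (W × M)) : Prop :=
  ∃ (w : W) (m : M), (∃ w0 : W, MovesManFromTo ρ1 m w0 w) ∧ (w, m) ∈ ρ2

/-- `ρ1` is a type 2 predecessor of `ρ2`: `ρ1` moves some woman `w` from a man
strictly below `m` to a man strictly above `m`, and `ρ2` moves `m` from a woman
strictly above `w` to a woman strictly below `w`. -/
def Market.Type2Pred (mkt : Market M W) (ρ1 ρ2 : List (W × M)) : Prop :=
  ∃ (m : M) (w : W) (mlo mhi : M) (whi wlo : W),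
    MovesWomanFromTo ρ1 w mlo mhi ∧
    mkt.wRank w (some mlo) < mkt.wRank w (some m) ∧
    mkt.wRank w (some m) < mkt.wRank w (some mhi) ∧
    MovesManFromTo ρ2 m whi wlo ∧
    mkt.mRank m (some wlo) < mkt.mRank m (some w) ∧
    mkt.mRank m (some w) < mkt.mRank m (some whi)

/-- `ρ1` is a (type 1 or type 2) predecessor of `ρ2`; these are the edges of
the predecessor graph `G(Π)`. -/
def Market.Pred (mkt : Market M W) (ρ1 ρ2 : List (W × M)) : Prop :=
  mkt.Type1Pred ρ1 ρ2 ∨ mkt.Type2Pred ρ1 ρ2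

/-- `σ` assigns each woman the more preferred of her partners in `μ` and `μ'`. -/
def Market.IsJoin (mkt : Market M W) (μ μ' σ : Matching M W) : Prop :=
  ∀ w, σ.nu w = if mkt.wRank w (μ'.nu w) ≤ mkt.wRank w (μ.nu w) then μ.nu w else μ'.nu w

/-- `σ` assigns each woman the less preferred of her partners in `μ` and `μ'`. -/
def Market.IsMeet (mkt : Market M W) (μ μ' σ : Matching M W) : Prop :=
  ∀ w, σ.nu w = if mkt.wRank w (μ.nu w) ≤ mkt.wRank w (μ'.nu w) then μ.nu w else μ'.nu w

/-- The market with the roles of men and women exchanged: a fact about one side of the market,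
applied to `mkt.swap`, gives the same fact about the other side. -/
def Market.swap (mkt : Market M W) : Market W M where
  mRank := mkt.wRank
  wRank := mkt.mRank
  mRank_inj := mkt.wRank_inj
  wRank_inj := mkt.mRank_inj

/-- The same matching, regarded as a matching of the market with the two sides exchanged. -/
def Matching.swap (μ : Matching M W) : Matching W M where
  mu := μ.nu
  nu := μ.mu
  consistent w m := (μ.consistent m w).symm

namespace Market

variable {mkt : Market M W} {μ μ' : Matching M W}

theorem Stable.swap (h : mkt.Stable μ) : mkt.swap.Stable μ.swap := by
  obtain ⟨⟨men_rational, women_rational⟩, not_blocking⟩ := h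
  refine ⟨⟨women_rational, men_rational⟩, ?_⟩
  rintro w m ⟨not_matched, w_prefers, m_prefers⟩
  exact not_blocking m w ⟨mt (μ.consistent m w).mp not_matched, m_prefers, w_prefers⟩

theorem IndivRational.wRank_none_le (h : mkt.IndivRational μ) (w : W) :
    mkt.wRank w none ≤ mkt.wRank w (μ.nu w) := by
  cases hw : μ.nu w with
  | none => exact le_rfl
  | some m => exact (h.2 w m hw).le

theorem Stable.wRank_le_of_mRank_le (h : mkt.Stable μ) {m : M} {w : W}
    (hm : mkt.mRank m (μ.mu m) ≤ mkt.mRank m (some w)) :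
    mkt.wRank w (some m) ≤ mkt.wRank w (μ.nu w) := by
  by_cases matched : μ.mu m = some w
  · rw [(μ.consistent m w).mp matched]
  · have m_prefers : mkt.mRank m (μ.mu m) < mkt.mRank m (some w) :=
      hm.lt_of_ne ((mkt.mRank_inj m).ne matched)
    exact not_lt.mp fun w_prefers => h.2 m w ⟨matched, m_prefers, w_prefers⟩

theorem Stable.forall_wRank_le_of_forall_mRank_le (h' : mkt.Stable μ')
    (hmen : ∀ m, mkt.mRank m (μ'.mu m) ≤ mkt.mRank m (μ.mu m)) (w : W) :
    mkt.wRank w (μ.nu w) ≤ mkt.wRank w (μ'.nu w) := by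
  cases hw : μ.nu w with
  | none => exact h'.1.wRank_none_le w
  | some m =>
    have hm : μ.mu m = some w := (μ.consistent m w).mpr hw
    exact h'.wRank_le_of_mRank_le (hm ▸ hmen m)

end Market

theorem men_prefer_iff_women_oppose_general (mkt : Market M W) (μ μ' : Matching M W)
    (h : mkt.Stable μ) (h' : mkt.Stable μ') :
    (∀ m : M, mkt.mRank m (μ'.mu m) ≤ mkt.mRank m (μ.mu m)) ↔
      (∀ w : W, mkt.wRank w (μ.nu w) ≤ mkt.wRank w (μ'.nu w)) :=
  ⟨h'.forall_wRank_le_of_forall_mRank_le, h.swap.forall_wRank_le_of_forall_mRank_le (μ := μ'.swap)⟩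

/-- every man weakly prefers `μ` to `μ'` iff every woman weakly
prefers `μ'` to `μ`. -/
theorem men_prefer_iff_women_oppose {M W : Type*} [Fintype M] [Fintype W]
    (mkt : Market M W) (μ μ' : Matching M W)
    (h : mkt.Stable μ) (h' : mkt.Stable μ') :
    (∀ m : M, mkt.mRank m (μ'.mu m) ≤ mkt.mRank m (μ.mu m)) ↔
      (∀ w : W, mkt.wRank w (μ.nu w) ≤ mkt.wRank w (μ'.nu w)) :=
  men_prefer_iff_women_oppose_general mkt μ μ' h h'
end

section
/- Let μ and μ' be stable matchings of the same matching market. Then the assignment μ∨μ' that gives each woman w the ≻_w-more-preferred of μ(w) and μ'(w) is a well-defined matching (in particular, each man receives under it the ≻_m-less-preferred of μ(m) and μ'(m)), and μ∨μ' is stable. -/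
variable {M W : Type*}

/-!
Suppose the man `m` strictly prefers `μ` to `μ'`. His partner `w` in `μ` must strictly prefer
`μ'` to `μ`, since otherwise `(m, w)` blocks `μ'`. Hence `μ` maps the set `A` of men who
strictly prefer `μ` injectively into the set `B` of women who strictly prefer `μ'`, and
symmetrically `μ'` maps `B` injectively into `A`. So `A` and `B` have the same cardinality and,
if it is finite, both matchings pair `A` with `B`. The join follows `μ'` on `A` and `B` and
follows `μ` elsewhere, hence is a matching; a pair blocking it would block `μ` or `μ'`,
whichever determines the man's partner.
-/

open Set

namespace Matching

/-- The matching `μ` with the roles of men and women exchanged, for arguments by symmetry. -/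
def swap_s6 (μ : Matching M W) : Matching W M where
  mu := μ.nu
  nu := μ.mu
  consistent w m := (μ.consistent m w).symm

theorem eq_of_mu_eq_some (μ : Matching M W) {m m' : M} {w : W}
    (hm : μ.mu m = some w) (hm' : μ.mu m' = some w) : m = m' :=
  Option.some_injective M <|
    ((μ.consistent m w).1 hm).symm.trans ((μ.consistent m' w).1 hm')

theorem injOn_mu_of_mapsTo (μ : Matching M W) {A : Set M} {B : Set W}
    (h : MapsTo μ.mu A (some '' B)) : InjOn μ.mu A := by
  intro m hm m' _ heq
  obtain ⟨w, -, hw⟩ := h hm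
  exact μ.eq_of_mu_eq_some hw.symm (heq.symm.trans hw.symm)

/-- The matching that follows `μ` on the men in `A` and the women in `B`, and `μ'` on all other
agents. The compatibility conditions say that neither matching pairs an agent of `A ∪ B` with
an agent outside it. -/
def piecewise (μ μ' : Matching M W) (A : Set M) (B : Set W)
    [∀ m, Decidable (m ∈ A)] [∀ w, Decidable (w ∈ B)]
    (hμ : ∀ m w, μ.mu m = some w → (m ∈ A ↔ w ∈ B))
    (hμ' : ∀ m w, μ'.mu m = some w → (m ∈ A ↔ w ∈ B)) : Matching M W where
  mu := A.piecewise μ.mu μ'.mu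
  nu := B.piecewise μ.nu μ'.nu
  consistent m w := by
    have hc := μ.consistent m w
    have hc' := μ'.consistent m w
    have hAB := hμ m w
    have hAB' := hμ' m w
    by_cases hm : m ∈ A <;> by_cases hw : w ∈ B <;> simp_all [Set.piecewise]

end Matching

namespace Market

variable {mkt : Market M W} {μ μ' σ : Matching M W} {m : M} {w : W}

/-- The market `mkt` with the roles of men and women exchanged, for arguments by symmetry. -/
def swap_s6 (mkt : Market M W) : Market W M where
  mRank := mkt.wRank
  wRank := mkt.mRank
  mRank_inj := mkt.wRank_inj
  wRank_inj := mkt.mRank_inj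

theorem Stable.swap_s6 (h : mkt.Stable μ) : mkt.swap_s6.Stable μ.swap_s6 :=
  ⟨h.1.symm, fun w m ⟨hne, hw, hm⟩ => h.2 m w ⟨mt (μ.consistent m w).1 hne, hm, hw⟩⟩

theorem IndivRational.mRank_none_le (h : mkt.IndivRational μ) (m : M) :
    mkt.mRank m none ≤ mkt.mRank m (μ.mu m) := by
  cases hm : μ.mu m with
  | none => exact le_rfl
  | some w => exact (h.1 m w hm).le

theorem Stable.wRank_lt_of_mRank_lt (h : mkt.Stable μ)
    (hm : mkt.mRank m (μ.mu m) < mkt.mRank m (some w)) :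
    mkt.wRank w (some m) < mkt.wRank w (μ.nu w) := by
  have hmu : μ.mu m ≠ some w := fun heq => hm.ne (congrArg _ heq)
  have hnu : some m ≠ μ.nu w := fun heq => hmu ((μ.consistent m w).2 heq.symm)
  have hle : mkt.wRank w (some m) ≤ mkt.wRank w (μ.nu w) :=
    not_lt.1 fun hw => h.2 m w ⟨hmu, hm, hw⟩
  exact hle.lt_of_ne ((mkt.wRank_inj w).ne hnu)

/-- The men who strictly prefer their partner in `μ` to their partner in `μ'`. -/
def menPreferring (mkt : Market M W) (μ μ' : Matching M W) : Set M :=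
  {m | mkt.mRank m (μ'.mu m) < mkt.mRank m (μ.mu m)}

/-- The women who strictly prefer their partner in `μ` to their partner in `μ'`. This is
definitionally `Market.menPreferring` of the swapped market and matchings. -/
def womenPreferring (mkt : Market M W) (μ μ' : Matching M W) : Set W :=
  {w | mkt.wRank w (μ'.nu w) < mkt.wRank w (μ.nu w)}

theorem mem_menPreferring :
    m ∈ mkt.menPreferring μ μ' ↔ mkt.mRank m (μ'.mu m) < mkt.mRank m (μ.mu m) :=
  Iff.rfl

theorem mem_womenPreferring :
    w ∈ mkt.womenPreferring μ μ' ↔ mkt.wRank w (μ'.nu w) < mkt.wRank w (μ.nu w) :=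
  Iff.rfl

theorem menPreferring_subset (mkt : Market M W) (μ μ' : Matching M W) :
    mkt.menPreferring μ μ' ⊆ {m | μ.mu m ≠ μ'.mu m} :=
  fun m hm heq => (mem_menPreferring.1 hm).ne (congrArg (mkt.mRank m) heq.symm)

theorem Stable.mapsTo_mu (h' : mkt.Stable μ') :
    MapsTo μ.mu (mkt.menPreferring μ μ') (some '' mkt.womenPreferring μ' μ) := by
  intro m hm
  rw [mem_menPreferring] at hm
  cases hw : μ.mu m with
  | none => exact absurd (hw ▸ hm) (h'.1.mRank_none_le m).not_gt
  | some w =>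
    refine ⟨w, ?_, rfl⟩
    rw [mem_womenPreferring, (μ.consistent m w).1 hw]
    exact h'.wRank_lt_of_mRank_lt (hw ▸ hm)

theorem Stable.encard_menPreferring_le (h' : mkt.Stable μ') :
    (mkt.menPreferring μ μ').encard ≤ (mkt.womenPreferring μ' μ).encard := by
  rw [← (Option.some_injective W).encard_image]
  exact encard_le_encard_of_injOn h'.mapsTo_mu (μ.injOn_mu_of_mapsTo h'.mapsTo_mu)

theorem Stable.encard_menPreferring_eq (h : mkt.Stable μ) (h' : mkt.Stable μ') :
    (mkt.menPreferring μ μ').encard = (mkt.womenPreferring μ' μ).encard :=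
  h'.encard_menPreferring_le.antisymm (h.swap_s6.encard_menPreferring_le (μ := μ'.swap_s6))

theorem Stable.image_mu_menPreferring (h : mkt.Stable μ) (h' : mkt.Stable μ')
    (hfin : (mkt.menPreferring μ μ').Finite) :
    μ.mu '' mkt.menPreferring μ μ' = some '' mkt.womenPreferring μ' μ := by
  refine (hfin.image _).eq_of_subset_of_encard_le h'.mapsTo_mu.image_subset ?_
  rw [(Option.some_injective W).encard_image, (μ.injOn_mu_of_mapsTo h'.mapsTo_mu).encard_image,
    h.encard_menPreferring_eq h']

theorem Stable.mem_menPreferring_iff_of_mu_left (h : mkt.Stable μ) (h' : mkt.Stable μ')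
    (hfin : (mkt.menPreferring μ μ').Finite) (hmw : μ.mu m = some w) :
    m ∈ mkt.menPreferring μ μ' ↔ w ∈ mkt.womenPreferring μ' μ := by
  rw [← (Option.some_injective W).mem_set_image, ← h.image_mu_menPreferring h' hfin, mem_image]
  refine ⟨fun hm => ⟨m, hm, hmw⟩, ?_⟩
  rintro ⟨m', hm', hm'w⟩
  exact μ.eq_of_mu_eq_some hm'w hmw ▸ hm'

theorem Stable.mem_menPreferring_iff_of_mu_right (h : mkt.Stable μ) (h' : mkt.Stable μ')
    (hfin : (mkt.menPreferring μ μ').Finite) (hmw : μ'.mu m = some w) :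
    m ∈ mkt.menPreferring μ μ' ↔ w ∈ mkt.womenPreferring μ' μ := by
  have hfin' : (mkt.womenPreferring μ' μ).Finite :=
    hfin.finite_of_encard_le (h.encard_menPreferring_eq h').ge
  exact (h'.swap_s6.mem_menPreferring_iff_of_mu_left h.swap_s6 hfin'
    ((μ'.consistent m w).1 hmw)).symm

theorem IsJoin.dom_left (hσ : mkt.IsJoin μ μ' σ) : mkt.Dom σ μ := by
  intro w
  rw [hσ w]
  split_ifs with hle
  · exact le_rfl
  · exact (not_le.1 hle).le

theorem IsJoin.dom_right (hσ : mkt.IsJoin μ μ' σ) : mkt.Dom σ μ' := by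
  intro w
  rw [hσ w]
  split_ifs with hle
  · exact hle
  · exact le_rfl

theorem IndivRational.of_mu_eq_or_eq (h : mkt.IndivRational μ) (h' : mkt.IndivRational μ')
    (hσ : ∀ m, σ.mu m = μ.mu m ∨ σ.mu m = μ'.mu m) : mkt.IndivRational σ := by
  have hmatched (m : M) (w : W) (hmw : σ.mu m = some w) : μ.mu m = some w ∨ μ'.mu m = some w :=
    (hσ m).imp (fun heq => heq.symm.trans hmw) fun heq => heq.symm.trans hmw
  constructor
  · intro m w hmw
    exact (hmatched m w hmw).elim (h.1 m w) (h'.1 m w)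
  · intro w m hwm
    rcases hmatched m w ((σ.consistent m w).2 hwm) with hmw | hmw
    · exact h.2 w m ((μ.consistent m w).1 hmw)
    · exact h'.2 w m ((μ'.consistent m w).1 hmw)

theorem Blocking.of_dom (hb : mkt.Blocking σ m w) (hm : σ.mu m = μ.mu m) (hdom : mkt.Dom σ μ) :
    mkt.Blocking μ m w :=
  ⟨hm ▸ hb.1, hm ▸ hb.2.1, (hdom w).trans_lt hb.2.2⟩

theorem Stable.of_mu_eq_or_eq_of_dom (h : mkt.Stable μ) (h' : mkt.Stable μ')
    (hσ : ∀ m, σ.mu m = μ.mu m ∨ σ.mu m = μ'.mu m) (hdom : mkt.Dom σ μ) (hdom' : mkt.Dom σ μ') :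
    mkt.Stable σ := by
  refine ⟨h.1.of_mu_eq_or_eq h'.1 hσ, fun m w hb => ?_⟩
  rcases hσ m with hm | hm
  · exact h.2 m w (hb.of_dom hm hdom)
  · exact h'.2 m w (hb.of_dom hm hdom')

end Market

theorem join_is_stable_matching_general {M W : Type*} (mkt : Market M W) (μ μ' : Matching M W)
    (h : mkt.Stable μ) (h' : mkt.Stable μ') (hfin : {m | μ.mu m ≠ μ'.mu m}.Finite) :
    ∃ σ : Matching M W,
      (∀ w : W, σ.nu w =
        if mkt.wRank w (μ'.nu w) ≤ mkt.wRank w (μ.nu w) then μ.nu w else μ'.nu w) ∧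
      (∀ m : M, σ.mu m =
        if mkt.mRank m (μ.mu m) ≤ mkt.mRank m (μ'.mu m) then μ.mu m else μ'.mu m) ∧
      mkt.Stable σ := by
  classical
  have hA : (mkt.menPreferring μ μ').Finite := hfin.subset (mkt.menPreferring_subset μ μ')
  let σ : Matching M W := μ'.piecewise μ (mkt.menPreferring μ μ') (mkt.womenPreferring μ' μ)
    (fun _ _ => h.mem_menPreferring_iff_of_mu_right h' hA)
    (fun _ _ => h.mem_menPreferring_iff_of_mu_left h' hA)
  have hmen (m : M) : σ.mu m =
      if mkt.mRank m (μ.mu m) ≤ mkt.mRank m (μ'.mu m) then μ.mu m else μ'.mu m := by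
    simp only [σ, Matching.piecewise, Set.piecewise, Market.mem_menPreferring, ← not_le,
      ite_not]
  have hjoin : mkt.IsJoin μ μ' σ := fun w => by
    simp only [σ, Matching.piecewise, Set.piecewise, Market.mem_womenPreferring, ← not_le,
      ite_not]
  have hmu (m : M) : σ.mu m = μ.mu m ∨ σ.mu m = μ'.mu m := hmen m ▸ ite_eq_or_eq ..
  exact ⟨σ, hjoin, hmen, h.of_mu_eq_or_eq_of_dom h' hmu hjoin.dom_left hjoin.dom_right⟩

/-- for stable `μ, μ'`, the assignment giving each woman the
more preferred of `μ(w)` and `μ'(w)` is a well-defined matching (each man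
receiving the less preferred of `μ(m)` and `μ'(m)`), and it is stable. -/
theorem join_is_stable_matching {M W : Type*} [Fintype M] [Fintype W]
    (mkt : Market M W) (μ μ' : Matching M W)
    (h : mkt.Stable μ) (h' : mkt.Stable μ') :
    ∃ σ : Matching M W,
      (∀ w : W, σ.nu w =
        if mkt.wRank w (μ'.nu w) ≤ mkt.wRank w (μ.nu w) then μ.nu w else μ'.nu w) ∧
      (∀ m : M, σ.mu m =
        if mkt.mRank m (μ.mu m) ≤ mkt.mRank m (μ'.mu m) then μ.mu m else μ'.mu m) ∧
      mkt.Stable σ :=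
  join_is_stable_matching_general mkt μ μ' h h' (Set.toFinite _)
end
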